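/- arXiv:2305.13350 — 3 statements merged into one kernel-verified Lean document; each statement's English description precedes it below -/
import Mathlib

section
/- For every nonnegative integer n, every ρ > 0, and every real x, the derivatives of the Gaussian kernel satisfy (∂^{2n}/∂x^{2n}) G(x,ρ) = ((-1)^n (2n)!/(2^n n!)) ρ^{2n+1} Λ^e_{2n}(xρ) and (∂^{2n+1}/∂x^{2n+1}) G(x,ρ) = ((-1)^{n+1} (2n+2)!/(2^{n+1} (n+1)!)) ρ^{2n+2} Λ^o_{2n+1}(xρ). -/
open MeasureTheory Filter Real

/-- The even kernel function `Λ^e_p(x)`. -/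
noncomputable def LamE (p x : ℝ) : ℝ :=
  (1 / Real.sqrt (2 * Real.pi)) *
    ∑' n : ℕ, (-1 : ℝ) ^ n * (∏ k ∈ Finset.range n, (p + 2 * (k : ℝ) + 1)) * x ^ (2 * n) /
      (Nat.factorial (2 * n) : ℝ)

/-- The odd kernel function `Λ^o_p(x)`. -/
noncomputable def LamO (p x : ℝ) : ℝ :=
  (1 / Real.sqrt (2 * Real.pi)) *
    ∑' n : ℕ, (-1 : ℝ) ^ n * (∏ k ∈ Finset.range n, (p + 2 * ((k : ℝ) + 1))) * x ^ (2 * n + 1) /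
      (Nat.factorial (2 * n + 1) : ℝ)

/-- The Gaussian kernel `G(x,ρ) = (ρ/√(2π)) e^{-(xρ)²/2}`. -/
noncomputable def Gauss (x ρ : ℝ) : ℝ :=
  ρ / Real.sqrt (2 * Real.pi) * Real.exp (-(x * ρ) ^ 2 / 2)

/-!
Termwise differentiation gives the ladder `(Λ^o_p)' = Λ^e_{p+1}` and
`(Λ^e_p)' = -(p+1) Λ^o_{p+1}` for every real `p`, so each pair of derivatives sends `Λ^e_p` to
`-(p+1) Λ^e_{p+2}`. Since `Λ^e_0` is the standard Gaussian density, `G(x,ρ) = ρ Λ^e_0(ρx)`, and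
climbing the ladder from `p = 0` produces the constants
`(-1)^n ∏_{k<n} (2k+1) = (-1)^n (2n)!/(2^n n!)`.
-/

theorem prod_range_two_mul_add_one {K : Type*} [Field K] [CharZero K] (n : ℕ) :
    ∏ k ∈ Finset.range n, (2 * (k : K) + 1) =
      (Nat.factorial (2 * n) : K) / (2 ^ n * (Nat.factorial n : K)) := by
  induction n with
  | zero => simp
  | succ n ih =>
    have hn : (n : K) + 1 ≠ 0 := n.cast_add_one_ne_zero
    have hfact : (Nat.factorial n : K) ≠ 0 := Nat.cast_ne_zero.2 n.factorial_ne_zero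
    rw [Finset.prod_range_succ, ih, show 2 * (n + 1) = 2 * n + 1 + 1 by ring]
    simp only [Nat.factorial_succ]
    push_cast
    field_simp
    ring

theorem hasDerivAt_tsum_of_summable_bound_closedBall {α 𝕜 F : Type*} [RCLike 𝕜]
    [NormedAddCommGroup F] [NormedSpace 𝕜 F] [CompleteSpace F] {g g' : α → 𝕜 → F} {u : ℝ → α → ℝ}
    (hu : ∀ R, Summable (u R)) (hg : ∀ n y, HasDerivAt (g n) (g' n y) y)
    (hg' : ∀ R n y, ‖y‖ ≤ R → ‖g' n y‖ ≤ u R n) (hg0 : Summable fun n => g n 0) (x : 𝕜) :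
    HasDerivAt (fun y => ∑' n, g n y) (∑' n, g' n x) x :=
  hasDerivAt_tsum_of_isPreconnected (hu (‖x‖ + 1)) Metric.isOpen_ball
    (convex_ball (0 : 𝕜) (‖x‖ + 1)).isPreconnected (fun n y _ => hg n y)
    (fun n y hy => hg' _ n y (mem_ball_zero_iff.1 hy).le) (Metric.mem_ball_self (by positivity))
    hg0 (mem_ball_zero_iff.2 (lt_add_one ‖x‖))

/-- The `n`-th term of the series defining `√(2π) Λ^e_p(x)`. -/
noncomputable def lamETerm (p : ℝ) (n : ℕ) (x : ℝ) : ℝ :=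
  (-1 : ℝ) ^ n * (∏ k ∈ Finset.range n, (p + 2 * (k : ℝ) + 1)) * x ^ (2 * n) /
    (Nat.factorial (2 * n) : ℝ)

/-- The `n`-th term of the series defining `√(2π) Λ^o_p(x)`. -/
noncomputable def lamOTerm (p : ℝ) (n : ℕ) (x : ℝ) : ℝ :=
  (-1 : ℝ) ^ n * (∏ k ∈ Finset.range n, (p + 2 * ((k : ℝ) + 1))) * x ^ (2 * n + 1) /
    (Nat.factorial (2 * n + 1) : ℝ)

section Bounds

theorem abs_prod_range_add_two_mul_add_one_le (p : ℝ) (n : ℕ) :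
    |∏ k ∈ Finset.range n, (p + 2 * (k : ℝ) + 1)| ≤
      (|p| + 1) ^ n * ∏ k ∈ Finset.range n, (2 * (k : ℝ) + 1) := by
  have factor_le (k : ℕ) : |p + 2 * (k : ℝ) + 1| ≤ (|p| + 1) * (2 * k + 1) :=
    calc |p + 2 * (k : ℝ) + 1| = |p + (2 * k + 1)| := by rw [add_assoc]
      _ ≤ |p| + |2 * (k : ℝ) + 1| := abs_add_le _ _
      _ = |p| + (2 * k + 1) := by rw [abs_of_nonneg (a := 2 * (k : ℝ) + 1) (by positivity)]
      _ ≤ (|p| + 1) * (2 * k + 1) := by nlinarith [mul_nonneg (abs_nonneg p) k.cast_nonneg]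
  calc |∏ k ∈ Finset.range n, (p + 2 * (k : ℝ) + 1)|
      = ∏ k ∈ Finset.range n, |p + 2 * (k : ℝ) + 1| := Finset.abs_prod _ _
    _ ≤ ∏ k ∈ Finset.range n, (|p| + 1) * (2 * (k : ℝ) + 1) :=
        Finset.prod_le_prod (fun _ _ => abs_nonneg _) fun k _ => factor_le k
    _ = (|p| + 1) ^ n * ∏ k ∈ Finset.range n, (2 * (k : ℝ) + 1) := by
        rw [Finset.prod_mul_distrib, Finset.prod_const, Finset.card_range]

variable {x R : ℝ}

theorem abs_lamETerm_le (p : ℝ) (n : ℕ) (hx : |x| ≤ R) :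
    |lamETerm p n x| ≤ ((|p| + 1) / 2 * R ^ 2) ^ n / (Nat.factorial n : ℝ) :=
  calc |lamETerm p n x|
      = |∏ k ∈ Finset.range n, (p + 2 * (k : ℝ) + 1)| * |x| ^ (2 * n) /
          (Nat.factorial (2 * n) : ℝ) := by
        simp [lamETerm, abs_mul, abs_div]
    _ ≤ (|p| + 1) ^ n * (∏ k ∈ Finset.range n, (2 * (k : ℝ) + 1)) * R ^ (2 * n) /
          (Nat.factorial (2 * n) : ℝ) := by
        gcongr
        exact abs_prod_range_add_two_mul_add_one_le p n
    _ = ((|p| + 1) / 2 * R ^ 2) ^ n / (Nat.factorial n : ℝ) := by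
        rw [prod_range_two_mul_add_one, mul_pow, div_pow, ← pow_mul]
        field_simp

theorem lamOTerm_eq_lamETerm_mul (p : ℝ) (n : ℕ) (x : ℝ) :
    lamOTerm p n x = lamETerm (p + 1) n x * (x / (2 * n + 1)) := by
  have hfactor (k : ℕ) : p + 2 * ((k : ℝ) + 1) = p + 1 + 2 * (k : ℝ) + 1 := by ring
  simp only [lamOTerm, lamETerm, hfactor, Nat.factorial_succ, pow_succ]
  push_cast
  field_simp

theorem abs_lamOTerm_le (p : ℝ) (n : ℕ) (hx : |x| ≤ R) :
    |lamOTerm p n x| ≤ ((|p + 1| + 1) / 2 * R ^ 2) ^ n / (Nat.factorial n : ℝ) * R := by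
  have abs_div_le : |x / (2 * n + 1)| ≤ R := by
    rw [abs_div, abs_of_pos (a := 2 * (n : ℝ) + 1) (by positivity)]
    exact (div_le_self (abs_nonneg x) (le_add_of_nonneg_left (by positivity))).trans hx
  rw [lamOTerm_eq_lamETerm_mul, abs_mul]
  gcongr
  exact abs_lamETerm_le (p + 1) n hx

theorem summable_lamETerm (p x : ℝ) : Summable fun n => lamETerm p n x :=
  (Real.summable_pow_div_factorial _).of_norm_bounded fun n => abs_lamETerm_le p n le_rfl

theorem summable_lamOTerm (p x : ℝ) : Summable fun n => lamOTerm p n x :=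
  ((Real.summable_pow_div_factorial _).mul_right _).of_norm_bounded fun n =>
    abs_lamOTerm_le p n le_rfl

end Bounds

section Ladder

theorem hasDerivAt_lamOTerm (p : ℝ) (n : ℕ) (x : ℝ) :
    HasDerivAt (lamOTerm p n) (lamETerm (p + 1) n x) x := by
  have hfactor (k : ℕ) : p + 2 * ((k : ℝ) + 1) = p + 1 + 2 * (k : ℝ) + 1 := by ring
  refine (((hasDerivAt_pow (2 * n + 1) x).const_mul _).div_const _).congr_deriv ?_
  simp only [lamETerm, hfactor, Nat.factorial_succ, Nat.add_sub_cancel]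
  push_cast
  field_simp

theorem hasDerivAt_lamETerm_succ (p : ℝ) (n : ℕ) (x : ℝ) :
    HasDerivAt (lamETerm p (n + 1)) (-(p + 1) * lamOTerm (p + 1) n x) x := by
  have hfactor (k : ℕ) : p + 2 * ((k + 1 : ℕ) : ℝ) + 1 = p + 1 + 2 * ((k : ℝ) + 1) := by
    push_cast; ring
  refine (((hasDerivAt_pow (2 * n + 1 + 1) x).const_mul _).div_const _).congr_deriv ?_
  simp only [lamOTerm, Finset.prod_range_succ', hfactor, mul_add_one, Nat.factorial_succ,
    Nat.add_sub_cancel]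
  push_cast
  field_simp
  ring

theorem hasDerivAt_lamO (p x : ℝ) : HasDerivAt (LamO p) (LamE (p + 1) x) x :=
  (hasDerivAt_tsum_of_summable_bound_closedBall (fun _ => Real.summable_pow_div_factorial _)
    (hasDerivAt_lamOTerm p) (fun _ n _ hy => abs_lamETerm_le (p + 1) n hy)
    (summable_lamOTerm p 0) x).const_mul _

theorem lamE_eq_one_add_tsum (p x : ℝ) :
    LamE p x = 1 / √(2 * π) * (1 + ∑' n, lamETerm p (n + 1) x) := by
  have term_zero : lamETerm p 0 x = 1 := by simp [lamETerm]
  have split_first := (summable_lamETerm p x).tsum_eq_zero_add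
  rw [term_zero] at split_first
  rw [← split_first]
  rfl

theorem hasDerivAt_lamE (p x : ℝ) : HasDerivAt (LamE p) (-(p + 1) * LamO (p + 1) x) x := by
  have hbound (R : ℝ) (n : ℕ) (y : ℝ) (hy : ‖y‖ ≤ R) :
      ‖-(p + 1) * lamOTerm (p + 1) n y‖ ≤
        |p + 1| * (((|p + 1 + 1| + 1) / 2 * R ^ 2) ^ n / (Nat.factorial n : ℝ) * R) := by
    rw [Real.norm_eq_abs, abs_mul, abs_neg]
    gcongr
    exact abs_lamOTerm_le (p + 1) n hy
  have hasDerivAt_tail : HasDerivAt (fun y => ∑' n, lamETerm p (n + 1) y)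
      (∑' n, -(p + 1) * lamOTerm (p + 1) n x) x :=
    hasDerivAt_tsum_of_summable_bound_closedBall
      (fun R => ((Real.summable_pow_div_factorial _).mul_right R).mul_left _)
      (hasDerivAt_lamETerm_succ p) hbound ((summable_nat_add_iff 1).2 (summable_lamETerm p 0)) x
  rw [funext (lamE_eq_one_add_tsum p)]
  refine ((hasDerivAt_tail.const_add 1).const_mul _).congr_deriv ?_
  rw [tsum_mul_left, mul_left_comm]
  rfl

theorem deriv_lamO (p : ℝ) : deriv (LamO p) = LamE (p + 1) :=
  deriv_eq (hasDerivAt_lamO p)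

theorem deriv_lamE (p : ℝ) : deriv (LamE p) = fun x => -(p + 1) * LamO (p + 1) x :=
  deriv_eq (hasDerivAt_lamE p)

theorem iteratedDeriv_two_mul_lamE (p : ℝ) (n : ℕ) :
    iteratedDeriv (2 * n) (LamE p) = fun x =>
      (-1) ^ n * (∏ k ∈ Finset.range n, (p + 2 * (k : ℝ) + 1)) * LamE (p + 2 * n) x := by
  induction n with
  | zero => simp
  | succ n ih =>
    have hindex : p + 2 * ((n + 1 : ℕ) : ℝ) = p + 2 * n + 1 + 1 := by push_cast; ring
    rw [mul_add_one, iteratedDeriv_succ, iteratedDeriv_succ, ih]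
    simp only [deriv_const_mul_field', deriv_lamE, deriv_lamO, hindex, Finset.prod_range_succ]
    ext x
    ring

theorem iteratedDeriv_two_mul_add_one_lamE (p : ℝ) (n : ℕ) :
    iteratedDeriv (2 * n + 1) (LamE p) = fun x =>
      (-1) ^ (n + 1) * (∏ k ∈ Finset.range (n + 1), (p + 2 * (k : ℝ) + 1)) *
        LamO (p + 2 * n + 1) x := by
  rw [iteratedDeriv_succ, iteratedDeriv_two_mul_lamE]
  simp only [deriv_const_mul_field', deriv_lamE, Finset.prod_range_succ]
  ext x
  ring

end Ladder

theorem lamE_zero (x : ℝ) : LamE 0 x = 1 / √(2 * π) * Real.exp (-x ^ 2 / 2) := by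
  rw [LamE, Real.exp_eq_exp_ℝ, NormedSpace.exp_eq_tsum_div]
  congr 1
  refine tsum_congr fun n => ?_
  simp only [zero_add]
  rw [prod_range_two_mul_add_one, div_pow, neg_pow (x ^ 2), ← pow_mul]
  field_simp

theorem contDiff_lamE_zero {m : WithTop ℕ∞} : ContDiff ℝ m (LamE 0) := by
  rw [funext lamE_zero]
  fun_prop

theorem gauss_eq_mul_lamE_zero (x ρ : ℝ) : Gauss x ρ = ρ * LamE 0 (ρ * x) := by
  rw [Gauss, lamE_zero, mul_comm x ρ]
  ring

theorem iteratedDeriv_gauss (m : ℕ) (ρ x : ℝ) :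
    iteratedDeriv m (fun y => Gauss y ρ) x = ρ ^ (m + 1) * iteratedDeriv m (LamE 0) (x * ρ) := by
  simp only [gauss_eq_mul_lamE_zero]
  rw [iteratedDeriv_const_mul_field, iteratedDeriv_comp_const_mul contDiff_lamE_zero,
    mul_comm x ρ]
  ring

/-- Derivatives of the Gaussian kernel in terms of the `Λ` kernels:
`(∂^{2n}/∂x^{2n}) G(x,ρ) = ((-1)^n (2n)!/(2^n n!)) ρ^{2n+1} Λ^e_{2n}(xρ)` and
`(∂^{2n+1}/∂x^{2n+1}) G(x,ρ) = ((-1)^{n+1} (2n+2)!/(2^{n+1}(n+1)!)) ρ^{2n+2} Λ^o_{2n+1}(xρ)`. -/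
theorem stmt_3 (n : ℕ) (ρ : ℝ) (hρ : 0 < ρ) (x : ℝ) :
    iteratedDeriv (2 * n) (fun y => Gauss y ρ) x =
      ((-1 : ℝ) ^ n * (Nat.factorial (2 * n) : ℝ) / (2 ^ n * (Nat.factorial n : ℝ))) *
        ρ ^ (2 * n + 1) * LamE (2 * n) (x * ρ) ∧
    iteratedDeriv (2 * n + 1) (fun y => Gauss y ρ) x =
      ((-1 : ℝ) ^ (n + 1) * (Nat.factorial (2 * n + 2) : ℝ) /
          (2 ^ (n + 1) * (Nat.factorial (n + 1) : ℝ))) *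
        ρ ^ (2 * n + 2) * LamO (2 * n + 1) (x * ρ) := by
  constructor
  · rw [iteratedDeriv_gauss, iteratedDeriv_two_mul_lamE]
    simp only [zero_add, prod_range_two_mul_add_one]
    ring
  · rw [iteratedDeriv_gauss, iteratedDeriv_two_mul_add_one_lamE]
    simp only [zero_add, prod_range_two_mul_add_one, mul_add_one 2 n]
    ring
end

section
/- The function Λ^e_p belongs to L¹(ℝ) for every p ≥ 0, and Λ^o_p belongs to L¹(ℝ) for every p > 0. On the other hand, Λ^o_0 does not belong to L¹(ℝ), and for every p < 0 neither Λ^e_p nor Λ^o_p belongs to L¹(ℝ). -/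
open MeasureTheory Filter Real

/-!
Up to the factor `1 / √(2π)`, the kernels are `M((p + 1) / 2, 1 / 2, -x² / 2)` and
`x * M((p + 2) / 2, 3 / 2, -x² / 2)`, where `M` is Kummer's confluent hypergeometric function.
Kummer's transformation `M(a, b, z) = exp z * M(b - a, b, -z)` turns the alternating series into
combinations of the functions `x ^ e * exp (-x² / 2) * (x² / 2) ^ n / n!` whose coefficients
`(b - a)_n / (b)_n` are all positive when `a < b`. The series may then be integrated term by term,
and the Gaussian moments reduce integrability to the summability of a ratio of Pochhammer symbols
`(c)_n / (d)_n`, which for `0 < c, d` holds if and only if `c + 1 < d`.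
-/

open Polynomial (ascPochhammer_smeval_eq_eval descPochhammer_smeval_eq_ascPochhammer)
open Finset.HasAntidiagonal (antidiagonal)
open scoped Nat Topology

section PochhammerSymbol

theorem ascPochhammer_eval_add {R : Type*} [CommSemiring R] (m n : ℕ) (r : R) :
    (ascPochhammer R (m + n)).eval r =
      (ascPochhammer R m).eval r * (ascPochhammer R n).eval (r + m) := by
  simp [← ascPochhammer_mul]

theorem ascPochhammer_eval_ne_zero {R : Type*} [CommRing R] [IsDomain R] {r : R}
    (hr : ∀ k : ℕ, r ≠ -k) (n : ℕ) : (ascPochhammer R n).eval r ≠ 0 := by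
  rw [Ne, ascPochhammer_eval_eq_zero_iff]
  rintro ⟨k, -, hk⟩
  exact hr k (by rw [hk, neg_neg])

-- With `(-1) ^ i * (c)_i` and `(b + i)_j` read as the falling factorials of `-c` and `b + n - 1`,
-- this is the Chu-Vandermonde identity.
theorem ascPochhammer_eval_sub {R : Type*} [CommRing R] (b c : R) (n : ℕ) :
    (ascPochhammer R n).eval (b - c) = ∑ ij ∈ antidiagonal n, (n.choose ij.1 : R) *
      ((-1) ^ ij.1 * (ascPochhammer R ij.1).eval c * (ascPochhammer R ij.2).eval (b + ij.1)) := by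
  have chuVandermonde := Ring.descPochhammer_smeval_add n (Commute.all (-c) (b + n - 1))
  simp only [descPochhammer_smeval_eq_ascPochhammer, ascPochhammer_smeval_eq_eval]
    at chuVandermonde
  convert! chuVandermonde using 1
  · congr 1; ring
  · refine Finset.sum_congr rfl fun ij hij => ?_
    have hn : (n : R) = ij.1 + ij.2 := by
      rw [← Finset.HasAntidiagonal.mem_antidiagonal.mp hij, Nat.cast_add]
    congr 2
    · rw [← descPochhammer_eval_eq_ascPochhammer, ← neg_neg c,
        ascPochhammer_eval_neg_eq_descPochhammer, ← mul_assoc, ← mul_pow]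
      simp
    · congr 1; rw [hn]; ring

theorem gamma_add_natCast {s : ℝ} (hs : ∀ k : ℕ, s ≠ -k) (n : ℕ) :
    Gamma (s + n) = Gamma s * (ascPochhammer ℝ n).eval s := by
  induction n with
  | zero => simp
  | succ n ih =>
    have hsn : s + n ≠ 0 := fun h => hs n (eq_neg_of_add_eq_zero_left h)
    rw [Nat.cast_succ, ← add_assoc, Gamma_add_one hsn, ih, ascPochhammer_succ_eval]
    ring

theorem prod_range_add_two_mul (c : ℝ) (n : ℕ) :
    ∏ k ∈ Finset.range n, (c + 2 * k) = 2 ^ n * (ascPochhammer ℝ n).eval (c / 2) := by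
  induction n with
  | zero => simp
  | succ n ih =>
    rw [Finset.prod_range_succ, ih, ascPochhammer_succ_eval]
    ring

theorem factorial_two_mul_eq_ascPochhammer (n : ℕ) :
    ((2 * n)! : ℝ) = 4 ^ n * n ! * (ascPochhammer ℝ n).eval (1 / 2) := by
  induction n with
  | zero => simp
  | succ n ih =>
    rw [Nat.mul_succ, Nat.factorial_succ, Nat.factorial_succ, Nat.factorial_succ,
      ascPochhammer_succ_eval]
    push_cast
    rw [ih]
    ring

theorem factorial_two_mul_add_one_eq_ascPochhammer (n : ℕ) :
    ((2 * n + 1)! : ℝ) = 4 ^ n * n ! * (ascPochhammer ℝ n).eval (3 / 2) := by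
  induction n with
  | zero => simp
  | succ n ih =>
    rw [Nat.mul_succ, Nat.factorial_succ, Nat.factorial_succ, Nat.factorial_succ n,
      ascPochhammer_succ_eval]
    push_cast
    rw [ih]
    ring

end PochhammerSymbol

/-- The ratio `(a)_n / (b)_n` of Pochhammer symbols, the coefficients of Kummer's function
(a junk value once `b + k = 0` for some `k < n`). -/
noncomputable def pochhammerRatio {K : Type*} [Field K] (a b : K) (n : ℕ) : K :=
  (ascPochhammer K n).eval a / (ascPochhammer K n).eval b

section PochhammerRatio

variable {K : Type*} [Field K] {a b : K}

@[simp]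
theorem pochhammerRatio_zero_right : pochhammerRatio a b 0 = 1 := by simp [pochhammerRatio]

theorem pochhammerRatio_succ (a b : K) (n : ℕ) :
    pochhammerRatio a b (n + 1) = pochhammerRatio a b n * ((a + n) / (b + n)) := by
  simp only [pochhammerRatio, ascPochhammer_succ_eval, mul_div_mul_comm]

theorem pochhammerRatio_add (a b : K) (m n : ℕ) :
    pochhammerRatio a b (m + n) = pochhammerRatio a b m * pochhammerRatio (a + m) (b + m) n := by
  simp only [pochhammerRatio, ascPochhammer_eval_add, mul_div_mul_comm]

theorem pochhammerRatio_self (hb : ∀ k : ℕ, b ≠ -k) (n : ℕ) : pochhammerRatio b b n = 1 :=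
  div_self (ascPochhammer_eval_ne_zero hb n)

theorem pochhammerRatio_mul_pochhammerRatio (hb : ∀ k : ℕ, b ≠ -k) (a c : K) (n : ℕ) :
    pochhammerRatio a b n * pochhammerRatio b c n = pochhammerRatio a c n :=
  div_mul_div_cancel₀ (ascPochhammer_eval_ne_zero hb n)

theorem sum_choose_mul_pochhammerRatio (hb : ∀ k : ℕ, b ≠ -k) (c : K) (n : ℕ) :
    ∑ ij ∈ antidiagonal n, (n.choose ij.1 : K) * ((-1) ^ ij.1 * pochhammerRatio c b ij.1) =
      pochhammerRatio (b - c) b n := by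
  rw [pochhammerRatio, ascPochhammer_eval_sub, Finset.sum_div]
  refine Finset.sum_congr rfl fun ij hij => ?_
  have hi := ascPochhammer_eval_ne_zero hb ij.1
  have hn := ascPochhammer_eval_ne_zero hb n
  rw [← Finset.HasAntidiagonal.mem_antidiagonal.mp hij, ascPochhammer_eval_add] at hn ⊢
  have hj := right_ne_zero_of_mul hn
  rw [pochhammerRatio]
  field_simp

-- The summands telescope: `(b + i) * u (i + 1) = (a + i) * u i` for `u := pochhammerRatio a b`.
theorem mul_sum_range_pochhammerRatio (hb : ∀ k : ℕ, b ≠ -k) (a : K) (m : ℕ) :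
    (b - 1 - a) * ∑ i ∈ Finset.range m, pochhammerRatio a b i =
      b - 1 - (b + m - 1) * pochhammerRatio a b m := by
  induction m with
  | zero => simp
  | succ m ih =>
    have hbm : b + m ≠ 0 := fun h => hb m (eq_neg_of_add_eq_zero_left h)
    rw [Finset.sum_range_succ, mul_add, ih, pochhammerRatio_succ]
    push_cast
    field_simp
    ring

end PochhammerRatio

section Summability

theorem ne_neg_natCast_of_pos {b : ℝ} (hb : 0 < b) (k : ℕ) : b ≠ -k :=
  (hb.trans_le' (neg_nonpos.mpr k.cast_nonneg)).ne'

theorem pochhammerRatio_pos {a b : ℝ} (ha : 0 < a) (hb : 0 < b) (n : ℕ) :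
    0 < pochhammerRatio a b n :=
  div_pos (ascPochhammer_pos n a ha) (ascPochhammer_pos n b hb)

theorem summable_pochhammerRatio_of_pos {a b : ℝ} (ha : 0 < a) (h : a + 1 < b) :
    Summable (pochhammerRatio a b) := by
  have hb : 0 < b := by linarith
  refine summable_of_sum_range_le (c := (b - 1) / (b - 1 - a))
    (fun n => (pochhammerRatio_pos ha hb n).le) fun m => ?_
  have hm : 0 ≤ (b + m - 1) * pochhammerRatio a b m :=
    mul_nonneg (by linarith [m.cast_nonneg (α := ℝ)]) (pochhammerRatio_pos ha hb m).le
  rw [le_div_iff₀ (by linarith), mul_comm,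
    mul_sum_range_pochhammerRatio (ne_neg_natCast_of_pos hb)]
  linarith

theorem div_le_pochhammerRatio_succ {a b : ℝ} (ha : 0 < a) (hb : 0 < b) (h : b ≤ a + 1) (m : ℕ) :
    a / (m + b) ≤ pochhammerRatio a b (m + 1) := by
  have hsum : 1 ≤ ∑ i ∈ Finset.range (m + 1), pochhammerRatio a b i := by
    simpa using Finset.single_le_sum (fun i _ => (pochhammerRatio_pos ha hb i).le)
      (Finset.mem_range.mpr m.succ_pos)
  have htel := mul_sum_range_pochhammerRatio (ne_neg_natCast_of_pos hb) a (m + 1)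
  push_cast at htel
  rw [div_le_iff₀ (by positivity)]
  nlinarith

theorem not_summable_pochhammerRatio {a b : ℝ} (ha : 0 < a) (hb : 0 < b) (h : b ≤ a + 1) :
    ¬ Summable (pochhammerRatio a b) := by
  intro hsum
  have hdiv : Summable fun m : ℕ => a / (m + b) :=
    ((summable_nat_add_iff 1).mpr hsum).of_nonneg_of_le (fun m => by positivity)
      (div_le_pochhammerRatio_succ ha hb h)
  refine lt_irrefl (1 : ℝ) ((Real.summable_one_div_nat_add_rpow b 1).mp ?_)
  refine (summable_mul_left_iff ha.ne').mp (hdiv.congr fun m => ?_)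
  rw [rpow_one, abs_of_pos (by positivity), mul_one_div]

theorem summable_pochhammerRatio {a b : ℝ} (h : a + 1 < b) : Summable (pochhammerRatio a b) := by
  obtain ⟨N, hN⟩ := exists_nat_gt (-a)
  rw [← summable_nat_add_iff N]
  simp only [add_comm _ N, pochhammerRatio_add]
  exact (summable_pochhammerRatio_of_pos (by linarith) (by linarith)).mul_left _

theorem summable_pochhammerRatio_zero_left (b : ℝ) : Summable (pochhammerRatio 0 b) :=
  summable_of_ne_finset_zero (s := {0}) fun n hn => by
    rw [pochhammerRatio, ascPochhammer_ne_zero_eval_zero _ (by simpa using hn), zero_div]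

end Summability

/-- Kummer's confluent hypergeometric function `M(a, b, z) = ₁F₁(a; b; z)`. -/
noncomputable def kummerFunction {𝕜 : Type*} [RCLike 𝕜] (a b z : 𝕜) : 𝕜 :=
  ∑' n : ℕ, pochhammerRatio a b n * (z ^ n / n !)

section KummerFunction

variable {𝕜 : Type*} [RCLike 𝕜]

theorem summable_norm_pochhammerRatio_mul (a b z : 𝕜) :
    Summable fun n : ℕ => ‖pochhammerRatio a b n * (z ^ n / n !)‖ := by
  have hratio : Tendsto (fun n : ℕ => ‖(a + n) / (b + n) * (z / ↑(n + 1))‖) atTop (𝓝 0) := by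
    have h₁ : Tendsto (fun n : ℕ => (a + n) / (b + n)) atTop (𝓝 1) := by
      simpa using tendsto_add_mul_div_add_mul_atTop_nhds a b 1 (one_ne_zero (α := 𝕜))
    have h₂ : Tendsto (fun n : ℕ => z / ((n + 1 : ℕ) : 𝕜)) atTop (𝓝 0) :=
      (tendsto_const_div_atTop_nhds_zero_nat z).comp (tendsto_add_atTop_nat 1)
    simpa using (h₁.mul h₂).norm
  refine summable_of_ratio_norm_eventually_le one_half_lt_one ?_
  filter_upwards [hratio.eventually_le_const one_half_pos] with n hn
  rw [norm_norm, norm_norm, pochhammerRatio_succ, Nat.factorial_succ, pow_succ, Nat.cast_mul,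
    show pochhammerRatio a b n * ((a + n) / (b + n)) * (z ^ n * z / (↑(n + 1) * (n ! : 𝕜))) =
      (a + n) / (b + n) * (z / ↑(n + 1)) * (pochhammerRatio a b n * (z ^ n / n !)) by ring,
    norm_mul]
  gcongr

theorem hasSum_kummerFunction (a b z : 𝕜) :
    HasSum (fun n : ℕ => pochhammerRatio a b n * (z ^ n / n !)) (kummerFunction a b z) :=
  (summable_norm_pochhammerRatio_mul a b z).of_norm.hasSum

theorem sum_antidiagonal_pochhammerRatio_mul {b : 𝕜} (hb : ∀ k : ℕ, b ≠ -k) (c z : 𝕜) (n : ℕ) :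
    ∑ ij ∈ antidiagonal n,
        pochhammerRatio c b ij.1 * ((-z) ^ ij.1 / ij.1 !) * (z ^ ij.2 / ij.2 !) =
      pochhammerRatio (b - c) b n * (z ^ n / n !) := by
  rw [← sum_choose_mul_pochhammerRatio hb, Finset.sum_mul]
  refine Finset.sum_congr rfl fun ij hij => ?_
  obtain rfl := Finset.HasAntidiagonal.mem_antidiagonal.mp hij
  have hfactorial := (ij.1 + ij.2).factorial_ne_zero
  rw [Nat.cast_add_choose, neg_pow z, pow_add]
  field_simp

theorem kummerFunction_eq_exp_mul {b : 𝕜} (hb : ∀ k : ℕ, b ≠ -k) (a z : 𝕜) :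
    kummerFunction a b z = NormedSpace.exp z * kummerFunction (b - a) b (-z) := by
  rw [mul_comm, kummerFunction, kummerFunction, NormedSpace.exp_eq_tsum_div,
    tsum_mul_tsum_eq_tsum_sum_antidiagonal_of_summable_norm
      (summable_norm_pochhammerRatio_mul (b - a) b (-z))
      (NormedSpace.norm_expSeries_div_summable z)]
  simp only [sum_antidiagonal_pochhammerRatio_mul hb, sub_sub_cancel]

end KummerFunction

section TermwiseIntegration

variable {α ι E : Type*} [MeasurableSpace α] {μ : Measure α} [NormedAddCommGroup E]
  {F : ι → α → E} {f : α → E}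

theorem integrable_of_hasSum_of_summable_integral_norm [Countable ι]
    (hF : ∀ i, Integrable (F i) μ) (hsum : Summable fun i => ∫ x, ‖F i x‖ ∂μ)
    (hf : ∀ᵐ x ∂μ, HasSum (F · x) (f x)) : Integrable f μ := by
  refine ⟨aestronglyMeasurable_of_tendsto_ae atTop
    (fun s => (integrable_finsetSum s fun i _ => hF i).aestronglyMeasurable) hf, ?_⟩
  calc ∫⁻ x, ‖f x‖ₑ ∂μ
      ≤ ∫⁻ x, ∑' i, ‖F i x‖ₑ ∂μ := lintegral_mono_ae <| hf.mono fun x hx => by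
        rw [← hx.tsum_eq]; exact enorm_tsum_le_tsum_enorm
    _ = ∑' i, ∫⁻ x, ‖F i x‖ₑ ∂μ := lintegral_tsum fun i => (hF i).1.enorm
    _ = ∑' i, ENNReal.ofReal (∫ x, ‖F i x‖ ∂μ) :=
        tsum_congr fun i => (ofReal_integral_norm_eq_lintegral_enorm (hF i)).symm
    _ < ⊤ := hsum.tsum_ofReal_lt_top

theorem summable_integral_norm_of_hasSum_norm (hF : ∀ i, Integrable (F i) μ)
    (hf : Integrable f μ) (hsum : ∀ᵐ x ∂μ, HasSum (fun i => ‖F i x‖) ‖f x‖) :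
    Summable fun i => ∫ x, ‖F i x‖ ∂μ := by
  refine summable_of_sum_le (c := ∫ x, ‖f x‖ ∂μ)
    (fun i => integral_nonneg fun x => norm_nonneg _) fun s => ?_
  rw [← integral_finsetSum s fun i _ => (hF i).norm]
  refine integral_mono_ae (integrable_finsetSum s fun i _ => (hF i).norm) hf.norm ?_
  filter_upwards [hsum] with x hx
  exact sum_le_hasSum s (fun i _ => norm_nonneg _) hx

end TermwiseIntegration

/-- The terms `x ^ e * exp (-x ^ 2 / 2) * (x ^ 2 / 2) ^ n / n!` into which Kummer's transformation
expands `x ^ e * M(a, b, -x ^ 2 / 2)`. -/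
noncomputable def gaussianTerm (e n : ℕ) (x : ℝ) : ℝ :=
  x ^ e * (rexp (-(x ^ 2 / 2)) * ((x ^ 2 / 2) ^ n / n !))

section GaussianTerm

theorem integral_abs_rpow_mul_exp_neg_mul_sq {b s : ℝ} (hb : 0 < b) (hs : -1 < s) :
    ∫ x : ℝ, |x| ^ s * rexp (-b * x ^ 2) = b ^ (-(s + 1) / 2) * Gamma ((s + 1) / 2) := by
  have habs := integral_comp_abs (f := fun x : ℝ => x ^ s * rexp (-b * x ^ (2 : ℝ)))
  rw [integral_rpow_mul_exp_neg_mul_rpow two_pos hs hb] at habs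
  simp only [rpow_two, sq_abs] at habs
  rw [habs]
  ring

theorem gaussianTerm_eq (e n : ℕ) (x : ℝ) :
    gaussianTerm e n x = (2 ^ n * n ! : ℝ)⁻¹ * (x ^ (2 * n + e) * rexp (-(1 / 2) * x ^ 2)) := by
  rw [gaussianTerm, pow_add, pow_mul, div_pow, show -(x ^ 2 / 2) = -(1 / 2) * x ^ 2 by ring]
  field_simp

theorem norm_gaussianTerm (e n : ℕ) (x : ℝ) : ‖gaussianTerm e n x‖ = gaussianTerm e n |x| := by
  simp [gaussianTerm]

theorem integrable_gaussianTerm (e n : ℕ) : Integrable (gaussianTerm e n) := by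
  have hpow := integrable_rpow_mul_exp_neg_mul_sq (b := 1 / 2) (by norm_num)
    (neg_one_lt_zero.trans_le (2 * n + e).cast_nonneg)
  simp only [rpow_natCast] at hpow
  exact (hpow.const_mul _).congr (.of_forall fun x => (gaussianTerm_eq e n x).symm)

theorem integral_norm_gaussianTerm (e n : ℕ) :
    ∫ x, ‖gaussianTerm e n x‖ =
      2 ^ ((e + 1) / 2 : ℝ) * Gamma ((e + 1) / 2) * pochhammerRatio ((e + 1) / 2 : ℝ) 1 n := by
  have hpos : (0 : ℝ) < (e + 1) / 2 := by positivity
  have hmoment := integral_abs_rpow_mul_exp_neg_mul_sq (b := 1 / 2) (by norm_num)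
    (neg_one_lt_zero.trans_le (2 * n + e).cast_nonneg)
  have hexponent : (((2 * n + e : ℕ) : ℝ) + 1) / 2 = (e + 1) / 2 + n := by push_cast; ring
  have htwo : (1 / 2 : ℝ) ^ (-((e + 1) / 2 + n) : ℝ) = 2 ^ ((e + 1) / 2 : ℝ) * 2 ^ n := by
    rw [one_div, inv_rpow two_pos.le, rpow_neg two_pos.le, inv_inv, rpow_add two_pos, rpow_natCast]
  simp only [rpow_natCast, neg_div, hexponent] at hmoment
  rw [gamma_add_natCast (ne_neg_natCast_of_pos hpos), htwo] at hmoment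
  simp_rw [norm_gaussianTerm, gaussianTerm_eq, sq_abs]
  rw [integral_const_mul, hmoment, pochhammerRatio, ascPochhammer_eval_one]
  field_simp

end GaussianTerm

section KummerIntegrability

variable {a b : ℝ} (e : ℕ)

theorem hasSum_pow_mul_kummerFunction (hb : ∀ k : ℕ, b ≠ -k) (a x : ℝ) :
    HasSum (fun n => pochhammerRatio (b - a) b n * gaussianTerm e n x)
      (x ^ e * kummerFunction a b (-(x ^ 2 / 2))) := by
  rw [kummerFunction_eq_exp_mul hb, ← exp_eq_exp_ℝ, neg_neg, ← mul_assoc]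
  convert! (hasSum_kummerFunction (b - a) b (x ^ 2 / 2)).mul_left
    (x ^ e * rexp (-(x ^ 2 / 2))) using 2 with n
  rw [gaussianTerm]
  ring

theorem hasSum_norm_pow_mul_kummerFunction (hb : 0 < b) (hab : a < b) (x : ℝ) :
    HasSum (fun n => ‖pochhammerRatio (b - a) b n * gaussianTerm e n x‖)
      ‖x ^ e * kummerFunction a b (-(x ^ 2 / 2))‖ := by
  have habs : ∀ n, ‖pochhammerRatio (b - a) b n * gaussianTerm e n x‖ =
      pochhammerRatio (b - a) b n * gaussianTerm e n |x| := fun n => by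
    rw [norm_mul, norm_gaussianTerm,
      norm_of_nonneg (pochhammerRatio_pos (sub_pos.mpr hab) hb n).le]
  have hsum := hasSum_pow_mul_kummerFunction e (ne_neg_natCast_of_pos hb) a |x|
  rw [sq_abs] at hsum
  have hnonneg : 0 ≤ kummerFunction a b (-(x ^ 2 / 2)) := by
    rw [kummerFunction_eq_exp_mul (ne_neg_natCast_of_pos hb), ← exp_eq_exp_ℝ, neg_neg]
    exact mul_nonneg (exp_pos _).le <| tsum_nonneg fun n =>
      mul_nonneg (pochhammerRatio_pos (sub_pos.mpr hab) hb n).le (by positivity)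
  simpa only [habs, norm_mul, norm_pow, norm_eq_abs, abs_of_nonneg hnonneg] using hsum

theorem summable_integral_norm_gaussianTerm_iff (c b : ℝ) :
    (Summable fun n => ∫ x, ‖pochhammerRatio c b n * gaussianTerm e n x‖) ↔
      Summable fun n => pochhammerRatio c b n * pochhammerRatio ((e + 1) / 2 : ℝ) 1 n := by
  have hpos : (0 : ℝ) < (e + 1) / 2 := by positivity
  have hconst : (2 : ℝ) ^ ((e + 1) / 2 : ℝ) * Gamma ((e + 1) / 2) ≠ 0 :=
    (mul_pos (by positivity) (Gamma_pos_of_pos hpos)).ne'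
  have hterm : ∀ n, ∫ x, ‖pochhammerRatio c b n * gaussianTerm e n x‖ =
      2 ^ ((e + 1) / 2 : ℝ) * Gamma ((e + 1) / 2) *
        |pochhammerRatio c b n * pochhammerRatio ((e + 1) / 2 : ℝ) 1 n| := fun n => by
    simp_rw [norm_mul]
    rw [integral_const_mul, integral_norm_gaussianTerm, abs_mul,
      abs_of_pos (pochhammerRatio_pos hpos one_pos n), norm_eq_abs]
    ring
  simp_rw [hterm, summable_mul_left_iff hconst, summable_abs_iff]

theorem integrable_pow_mul_kummerFunction (hb : ∀ k : ℕ, b ≠ -k)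
    (h : Summable fun n => pochhammerRatio (b - a) b n * pochhammerRatio ((e + 1) / 2 : ℝ) 1 n) :
    Integrable fun x : ℝ => x ^ e * kummerFunction a b (-(x ^ 2 / 2)) :=
  integrable_of_hasSum_of_summable_integral_norm
    (fun n => (integrable_gaussianTerm e n).const_mul _)
    ((summable_integral_norm_gaussianTerm_iff e (b - a) b).mpr h)
    (.of_forall (hasSum_pow_mul_kummerFunction e hb a))

theorem summable_of_integrable_pow_mul_kummerFunction (hb : 0 < b) (hab : a < b)
    (h : Integrable fun x : ℝ => x ^ e * kummerFunction a b (-(x ^ 2 / 2))) :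
    Summable fun n => pochhammerRatio (b - a) b n * pochhammerRatio ((e + 1) / 2 : ℝ) 1 n :=
  (summable_integral_norm_gaussianTerm_iff e (b - a) b).mp <| summable_integral_norm_of_hasSum_norm
    (fun n => (integrable_gaussianTerm e n).const_mul _) h
    (.of_forall (hasSum_norm_pow_mul_kummerFunction e hb hab))

end KummerIntegrability

section Kernels

theorem LamE_eq_kummerFunction (p x : ℝ) :
    LamE p x = 1 / √(2 * π) * (x ^ 0 * kummerFunction ((p + 1) / 2) (1 / 2) (-(x ^ 2 / 2))) := by
  rw [LamE, kummerFunction, pow_zero, one_mul]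
  congr 1
  refine tsum_congr fun n => ?_
  have hprod : ∏ k ∈ Finset.range n, (p + 2 * (k : ℝ) + 1) =
      2 ^ n * (ascPochhammer ℝ n).eval ((p + 1) / 2) := by
    rw [← prod_range_add_two_mul]
    exact Finset.prod_congr rfl fun k _ => by ring
  rw [hprod, factorial_two_mul_eq_ascPochhammer, pochhammerRatio, pow_mul,
    neg_pow (x ^ 2 / 2), div_pow, show (4 : ℝ) = 2 * 2 by norm_num, mul_pow]
  field_simp

theorem LamO_eq_kummerFunction (p x : ℝ) :
    LamO p x = 1 / √(2 * π) * (x ^ 1 * kummerFunction ((p + 2) / 2) (3 / 2) (-(x ^ 2 / 2))) := by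
  rw [LamO, kummerFunction, pow_one]
  congr 1
  rw [← tsum_mul_left]
  refine tsum_congr fun n => ?_
  have hprod : ∏ k ∈ Finset.range n, (p + 2 * ((k : ℝ) + 1)) =
      2 ^ n * (ascPochhammer ℝ n).eval ((p + 2) / 2) := by
    rw [← prod_range_add_two_mul]
    exact Finset.prod_congr rfl fun k _ => by ring
  rw [hprod, factorial_two_mul_add_one_eq_ascPochhammer, pochhammerRatio, pow_succ, pow_mul,
    neg_pow (x ^ 2 / 2), div_pow, show (4 : ℝ) = 2 * 2 by norm_num, mul_pow]
  field_simp

theorem isUnit_one_div_sqrt_two_pi : IsUnit (1 / √(2 * π)) :=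
  IsUnit.mk0 _ (by positivity)

theorem integrable_LamE_iff (p : ℝ) : Integrable (LamE p) ↔ 0 ≤ p := by
  have hhalf : (0 : ℝ) < 1 / 2 := by norm_num
  have hcoeff : (fun n => pochhammerRatio (1 / 2 - (p + 1) / 2) (1 / 2) n *
      pochhammerRatio (((0 : ℕ) + 1) / 2 : ℝ) 1 n) = pochhammerRatio (-p / 2) 1 := by
    ext n
    rw [Nat.cast_zero, zero_add, pochhammerRatio_mul_pochhammerRatio (ne_neg_natCast_of_pos hhalf)]
    congr 1
    ring
  rw [funext (LamE_eq_kummerFunction p), integrable_const_mul_iff isUnit_one_div_sqrt_two_pi]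
  refine ⟨fun hint => ?_, fun hp => ?_⟩
  · by_contra! hp
    have hsum := summable_of_integrable_pow_mul_kummerFunction 0 hhalf (by linarith) hint
    rw [hcoeff] at hsum
    exact not_summable_pochhammerRatio (by linarith) one_pos (by linarith) hsum
  · refine integrable_pow_mul_kummerFunction 0 (ne_neg_natCast_of_pos hhalf) ?_
    rw [hcoeff]
    rcases hp.eq_or_lt with rfl | hp
    · simpa using summable_pochhammerRatio_zero_left (1 : ℝ)
    · exact summable_pochhammerRatio (by linarith)

theorem integrable_LamO_iff (p : ℝ) : Integrable (LamO p) ↔ 0 < p := by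
  have hb : (0 : ℝ) < 3 / 2 := by norm_num
  have hcoeff : (fun n => pochhammerRatio (3 / 2 - (p + 2) / 2) (3 / 2) n *
      pochhammerRatio (((1 : ℕ) + 1) / 2 : ℝ) 1 n) = pochhammerRatio ((1 - p) / 2) (3 / 2) := by
    ext n
    rw [Nat.cast_one, one_add_one_eq_two, div_self two_ne_zero,
      pochhammerRatio_self (ne_neg_natCast_of_pos one_pos), mul_one]
    congr 1
    ring
  rw [funext (LamO_eq_kummerFunction p), integrable_const_mul_iff isUnit_one_div_sqrt_two_pi]
  refine ⟨fun hint => ?_, fun hp => ?_⟩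
  · by_contra! hp
    have hsum := summable_of_integrable_pow_mul_kummerFunction 1 hb (by linarith) hint
    rw [hcoeff] at hsum
    exact not_summable_pochhammerRatio (by linarith) hb (by linarith) hsum
  · refine integrable_pow_mul_kummerFunction 1 (ne_neg_natCast_of_pos hb) ?_
    rw [hcoeff]
    exact summable_pochhammerRatio (by linarith)

end Kernels

/-- Integrability of the kernels: `Λ^e_p ∈ L¹(ℝ)` for `p ≥ 0`, `Λ^o_p ∈ L¹(ℝ)` for `p > 0`,
`Λ^o_0 ∉ L¹(ℝ)`, and for `p < 0` neither `Λ^e_p` nor `Λ^o_p` is in `L¹(ℝ)`. -/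
theorem stmt_5 :
    (∀ p : ℝ, 0 ≤ p → Integrable (fun x => LamE p x)) ∧
    (∀ p : ℝ, 0 < p → Integrable (fun x => LamO p x)) ∧
    ¬ Integrable (fun x => LamO 0 x) ∧
    (∀ p : ℝ, p < 0 → ¬ Integrable (fun x => LamE p x) ∧ ¬ Integrable (fun x => LamO p x)) :=
  ⟨fun p => (integrable_LamE_iff p).mpr,
    fun p => (integrable_LamO_iff p).mpr,
    fun hint => lt_irrefl 0 ((integrable_LamO_iff 0).mp hint),
    fun p hp => ⟨fun hint => hp.not_ge ((integrable_LamE_iff p).mp hint),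
      fun hint => hp.asymm ((integrable_LamO_iff p).mp hint)⟩⟩
end

section
/- Let p > 0, let α, β be real numbers, and let f : ℝ → ℝ be continuous, bounded, and integrable. Define the kernel g(x,ρ) = ρ^{p+1} (α Λ^e_p(xρ) + β Λ^o_p(xρ)) for ρ > 0 and the convolution φ(x,ρ) = ∫_ℝ f(v) g(x−v, ρ) dv. Then φ is twice differentiable in x and differentiable in ρ on ℝ × (0,∞), and for all x ∈ ℝ and ρ > 0 one has ∂²φ/∂x²(x,ρ) = −ρ³ · ∂φ/∂ρ(x,ρ). Consequently the strong monotonicity condition holds: ∂φ/∂ρ(x,ρ) · ∂²φ/∂x²(x,ρ) ≤ 0, with strict inequality whenever ∂φ/∂ρ(x,ρ) ≠ 0 or ∂²φ/∂x²(x,ρ) ≠ 0. -/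
open MeasureTheory Filter Real

/-!
Write `q = p + 1`. Up to the factor `1 / √(2π)`, the profile `u = α Λᵉ_p + β Λᵒ_p` is the
exponential generating function of a sequence with `a (n + 2) = -(n + q) a n`, so it solves
`u'' + x u' + q u = 0`. The energy `u' ^ 2 + q u ^ 2` of a solution has derivative `-2 x u' ^ 2`,
hence is maximal at `0` and `u` is bounded when `q > 0`. Since `u'` and `u''` are generated by the
shifted sequences, which satisfy the same recurrence with `q + 1` and `q + 2`, they are bounded too,
and differentiation under the integral sign is legitimate. The equation in `(x, ρ)` is then the ODE:
`∂_ρ (ρ ^ q u (y ρ)) = ρ ^ (q - 1) (q u + z u') = -ρ ^ (q - 1) u''` at `z = y ρ`, while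
`∂_y² (ρ ^ q u (y ρ)) = ρ ^ (q + 2) u''`.
-/

section ExpGenFun

open scoped Nat

variable {𝕜 : Type*} [RCLike 𝕜] {a : ℕ → 𝕜}

/-- The exponential generating function `∑ aₙ xⁿ / n!` of the sequence `a`, as a function on `𝕜`;
differentiating it amounts to shifting `a`. It is a `tsum`, hence `0` where the series diverges. -/
noncomputable def expGenFun (a : ℕ → 𝕜) (x : 𝕜) : 𝕜 :=
  ∑' n, a n * x ^ n / (n ! : 𝕜)

theorem hasSum_expGenFun {x : 𝕜} (ha : Summable fun n ↦ a n * x ^ n / (n ! : 𝕜)) :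
    HasSum (fun n ↦ a n * x ^ n / (n ! : 𝕜)) (expGenFun a x) :=
  ha.hasSum

theorem expGenFun_eq_tsum_even_add_tsum_odd {x : 𝕜}
    (ha : Summable fun n ↦ a n * x ^ n / (n ! : 𝕜)) :
    expGenFun a x = (∑' n, a (2 * n) * x ^ (2 * n) / ((2 * n)! : 𝕜)) +
      ∑' n, a (2 * n + 1) * x ^ (2 * n + 1) / ((2 * n + 1)! : 𝕜) := by
  have heven := ha.comp_injective (i := fun n : ℕ ↦ 2 * n) fun m n h ↦ by lia
  have hodd := ha.comp_injective (i := fun n : ℕ ↦ 2 * n + 1) fun m n h ↦ by lia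
  exact (tsum_even_add_odd (f := fun n ↦ a n * x ^ n / (n ! : 𝕜)) heven hodd).symm

theorem hasDerivAt_mul_pow_succ_div_factorial (c : 𝕜) (n : ℕ) (x : 𝕜) :
    HasDerivAt (fun y ↦ c * y ^ (n + 1) / ((n + 1)! : 𝕜)) (c * x ^ n / (n ! : 𝕜)) x := by
  refine (((hasDerivAt_pow (n + 1) x).const_mul c).div_const _).congr_deriv ?_
  have hfact : (n ! : 𝕜) ≠ 0 := mod_cast n.factorial_ne_zero
  have hsucc : (n + 1 : 𝕜) ≠ 0 := mod_cast n.succ_ne_zero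
  rw [Nat.factorial_succ, Nat.add_sub_cancel]
  push_cast
  field_simp

theorem hasDerivAt_expGenFun_of_summable (ha : ∀ x, Summable fun n ↦ a n * x ^ n / (n ! : 𝕜))
    (ha' : ∀ x, Summable fun n ↦ a (n + 1) * x ^ n / (n ! : 𝕜)) (x : 𝕜) :
    HasDerivAt (expGenFun a) (expGenFun (fun n ↦ a (n + 1)) x) x := by
  have hsplit : expGenFun a = fun y ↦ a 0 + ∑' n, a (n + 1) * y ^ (n + 1) / ((n + 1)! : 𝕜) := by
    funext y
    simpa [expGenFun] using (ha y).tsum_eq_zero_add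
  rw [hsplit]
  refine HasDerivAt.const_add _ ?_
  set R : ℝ := ‖x‖ + 1 with hR
  have hR_nonneg : 0 ≤ R := by positivity
  refine hasDerivAt_tsum_of_isPreconnected (t := Metric.ball 0 R) (y₀ := 0)
    (ha' (R : 𝕜)).norm Metric.isOpen_ball (convex_ball 0 R).isPreconnected
    (fun n y _ ↦ hasDerivAt_mul_pow_succ_div_factorial (a (n + 1)) n y)
    (fun n y hy ↦ ?_) (Metric.mem_ball_self (by positivity)) (by simp) (by simp [hR])
  have hy_le : ‖y‖ ≤ ‖(R : 𝕜)‖ := by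
    rw [RCLike.norm_ofReal, abs_of_nonneg hR_nonneg]
    exact (mem_ball_zero_iff.1 hy).le
  simp only [norm_div, norm_mul, norm_pow]
  gcongr

theorem hasSum_mul_expGenFun_succ {x : 𝕜} (ha' : Summable fun n ↦ a (n + 1) * x ^ n / (n ! : 𝕜)) :
    HasSum (fun n ↦ n * (a n * x ^ n / (n ! : 𝕜))) (x * expGenFun (fun n ↦ a (n + 1)) x) := by
  rw [← hasSum_nat_add_iff' 1]
  have hterm (n : ℕ) : ((n + 1 : ℕ) : 𝕜) * (a (n + 1) * x ^ (n + 1) / ((n + 1)! : 𝕜)) =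
      x * (a (n + 1) * x ^ n / (n ! : 𝕜)) := by
    have hfact : (n ! : 𝕜) ≠ 0 := mod_cast n.factorial_ne_zero
    have hsucc : (n + 1 : 𝕜) ≠ 0 := mod_cast n.succ_ne_zero
    rw [Nat.factorial_succ]
    push_cast
    field_simp
    ring
  simpa only [hterm, Finset.sum_range_one, Nat.cast_zero, zero_mul, sub_zero]
    using (hasSum_expGenFun ha').mul_left x

end ExpGenFun

section IsHermiteSeq

open scoped Nat

variable {𝕜 : Type*} [RCLike 𝕜] {a : ℕ → 𝕜} {q : 𝕜}

theorem summable_of_eventually_norm_add_two_le {E : Type*} [NormedAddCommGroup E] [CompleteSpace E]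
    {t : ℕ → E} {r : ℝ} (hr : r < 1) (h : ∀ᶠ n in atTop, ‖t (n + 2)‖ ≤ r * ‖t n‖) :
    Summable t := by
  have htwo_mul : Tendsto (fun n : ℕ ↦ 2 * n) atTop atTop :=
    tendsto_id.const_mul_atTop' two_pos
  exact .even_add_odd
    (summable_of_ratio_norm_eventually_le hr (htwo_mul.eventually h))
    (summable_of_ratio_norm_eventually_le hr
      ((tendsto_add_atTop_nat 1).comp htwo_mul |>.eventually h))

/-- The recurrence satisfied by the Taylor coefficients `aₙ` (with respect to `xⁿ / n!`) of a
solution of the Hermite-type equation `u'' + x u' + q u = 0`. -/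
def IsHermiteSeq (q : 𝕜) (a : ℕ → 𝕜) : Prop :=
  ∀ n, a (n + 2) = -(n + q) * a n

namespace IsHermiteSeq

theorem shift (ha : IsHermiteSeq q a) : IsHermiteSeq (q + 1) fun n ↦ a (n + 1) := by
  intro n
  change a (n + 1 + 2) = _
  rw [ha (n + 1)]
  push_cast
  ring

theorem mul_pow_div_factorial_add_two (ha : IsHermiteSeq q a) (x : 𝕜) (n : ℕ) :
    a (n + 2) * x ^ (n + 2) / ((n + 2)! : 𝕜) =
      -((n + q) * x ^ 2 / ((n + 2) * (n + 1))) * (a n * x ^ n / (n ! : 𝕜)) := by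
  have hfact : (n ! : 𝕜) ≠ 0 := mod_cast n.factorial_ne_zero
  have hsucc : (n + 1 : 𝕜) ≠ 0 := mod_cast n.succ_ne_zero
  have hsucc' : (n + 2 : 𝕜) ≠ 0 := mod_cast (n + 1).succ_ne_zero
  rw [ha n, Nat.factorial_succ, Nat.factorial_succ]
  push_cast
  rw [show (n : 𝕜) + 1 + 1 = n + 2 by ring]
  field_simp
  ring

theorem summable_expGenFun (ha : IsHermiteSeq q a) (x : 𝕜) :
    Summable fun n ↦ a n * x ^ n / (n ! : 𝕜) := by
  refine summable_of_eventually_norm_add_two_le one_half_lt_one ?_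
  obtain ⟨N, hN⟩ := exists_nat_ge (2 * ((1 + ‖q‖) * ‖x‖ ^ 2))
  filter_upwards [eventually_ge_atTop N] with n hn
  have hnN : (N : ℝ) ≤ n := mod_cast hn
  have hnorm : ‖(n : 𝕜) + q‖ ≤ (1 + ‖q‖) * (n + 1) := by
    have := norm_add_le (n : 𝕜) q
    rw [RCLike.norm_natCast] at this
    nlinarith [mul_nonneg (norm_nonneg q) n.cast_nonneg]
  have hden : ‖((n : 𝕜) + 2) * (n + 1)‖ = (n + 2) * (n + 1) := by
    exact_mod_cast RCLike.norm_natCast (K := 𝕜) ((n + 2) * (n + 1))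
  rw [ha.mul_pow_div_factorial_add_two, norm_mul, norm_neg, norm_div, hden, norm_mul, norm_pow]
  refine mul_le_mul_of_nonneg_right ?_ (norm_nonneg _)
  calc ‖(n : 𝕜) + q‖ * ‖x‖ ^ 2 / ((n + 2) * (n + 1))
      ≤ (1 + ‖q‖) * (n + 1) * ‖x‖ ^ 2 / ((n + 2) * (n + 1)) := by gcongr
    _ = (1 + ‖q‖) * ‖x‖ ^ 2 / (n + 2) := by field_simp
    _ ≤ 1 / 2 := by
      rw [div_le_iff₀ (by positivity)]
      linarith

theorem hasDerivAt_expGenFun (ha : IsHermiteSeq q a) (x : 𝕜) :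
    HasDerivAt (expGenFun a) (expGenFun (fun n ↦ a (n + 1)) x) x :=
  hasDerivAt_expGenFun_of_summable ha.summable_expGenFun ha.shift.summable_expGenFun x

theorem expGenFun_ode (ha : IsHermiteSeq q a) (x : 𝕜) :
    expGenFun (fun n ↦ a (n + 2)) x =
      -(x * expGenFun (fun n ↦ a (n + 1)) x + q * expGenFun a x) := by
  have hsum := ((hasSum_mul_expGenFun_succ (ha.shift.summable_expGenFun x)).add
    ((hasSum_expGenFun (ha.summable_expGenFun x)).mul_left q)).neg
  rw [← hsum.tsum_eq]
  refine tsum_congr fun n ↦ ?_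
  simp only [ha n]
  ring

end IsHermiteSeq

end IsHermiteSeq

section Energy

variable {q : ℝ} {u u' u'' : ℝ → ℝ}

theorem hermite_energy_le (hu : ∀ x, HasDerivAt u (u' x) x) (hu' : ∀ x, HasDerivAt u' (u'' x) x)
    (hode : ∀ x, u'' x = -(x * u' x + q * u x)) (x : ℝ) :
    u' x ^ 2 + q * u x ^ 2 ≤ u' 0 ^ 2 + q * u 0 ^ 2 := by
  have henergy (y : ℝ) :
      HasDerivAt (fun y ↦ u' y ^ 2 + q * u y ^ 2) (-2 * y * u' y ^ 2) y := by
    refine (((hu' y).fun_pow 2).add (((hu y).fun_pow 2).const_mul q)).congr_deriv ?_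
    rw [hode]
    ring
  have hdiff : Differentiable ℝ fun y ↦ u' y ^ 2 + q * u y ^ 2 :=
    fun y ↦ (henergy y).differentiableAt
  refine isMaxOn_univ_of_deriv (hdiff 0).continuousAt hdiff.differentiableOn
    hdiff.differentiableOn (fun y hy ↦ ?_) (fun y hy ↦ ?_) (Set.mem_univ x)
  · rw [(henergy y).deriv]
    exact mul_nonneg (by linarith [Set.mem_Iio.1 hy]) (sq_nonneg _)
  · rw [(henergy y).deriv]
    exact mul_nonpos_of_nonpos_of_nonneg (by linarith [Set.mem_Ioi.1 hy]) (sq_nonneg _)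

theorem exists_abs_le_of_hermite_ode (hq : 0 < q) (hu : ∀ x, HasDerivAt u (u' x) x)
    (hu' : ∀ x, HasDerivAt u' (u'' x) x) (hode : ∀ x, u'' x = -(x * u' x + q * u x)) :
    ∃ C, ∀ x, |u x| ≤ C := by
  refine ⟨√((u' 0 ^ 2 + q * u 0 ^ 2) / q), fun x ↦ abs_le_sqrt ?_⟩
  rw [le_div_iff₀ hq]
  linarith [hermite_energy_le hu hu' hode x, sq_nonneg (u' x)]

theorem IsHermiteSeq.exists_abs_expGenFun_le {a : ℕ → ℝ} (ha : IsHermiteSeq q a) (hq : 0 < q) :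
    ∃ C, ∀ x, |expGenFun a x| ≤ C :=
  exists_abs_le_of_hermite_ode hq ha.hasDerivAt_expGenFun ha.shift.hasDerivAt_expGenFun
    ha.expGenFun_ode

end Energy

section Profile

/-- The Taylor coefficients of `α Λᵉ_p + β Λᵒ_p`, up to the factor `1 / √(2π)`, where `q = p + 1`:
the sequence with initial values `α`, `β` satisfying `IsHermiteSeq q`. -/
def hermiteSeq (q α β : ℝ) : ℕ → ℝ
  | 0 => α
  | 1 => β
  | n + 2 => -(n + q) * hermiteSeq q α β n

theorem isHermiteSeq_hermiteSeq (q α β : ℝ) : IsHermiteSeq q (hermiteSeq q α β) :=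
  fun _ ↦ rfl

theorem hermiteSeq_two_mul (p α β : ℝ) (n : ℕ) :
    hermiteSeq (p + 1) α β (2 * n) =
      α * ((-1) ^ n * ∏ k ∈ Finset.range n, (p + 2 * (k : ℝ) + 1)) := by
  induction n with
  | zero => simp [hermiteSeq]
  | succ n ih =>
    rw [mul_add_one, isHermiteSeq_hermiteSeq, ih, Finset.prod_range_succ]
    push_cast
    ring

theorem hermiteSeq_two_mul_add_one (p α β : ℝ) (n : ℕ) :
    hermiteSeq (p + 1) α β (2 * n + 1) =
      β * ((-1) ^ n * ∏ k ∈ Finset.range n, (p + 2 * ((k : ℝ) + 1))) := by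
  induction n with
  | zero => simp [hermiteSeq]
  | succ n ih =>
    rw [show 2 * (n + 1) + 1 = 2 * n + 1 + 2 by ring, isHermiteSeq_hermiteSeq, ih,
      Finset.prod_range_succ]
    push_cast
    ring

theorem mul_LamE_add_mul_LamO (p α β x : ℝ) :
    α * LamE p x + β * LamO p x =
      expGenFun (hermiteSeq (p + 1) (α / √(2 * π)) (β / √(2 * π))) x := by
  rw [expGenFun_eq_tsum_even_add_tsum_odd ((isHermiteSeq_hermiteSeq _ _ _).summable_expGenFun x),
    LamE, LamO]
  simp only [hermiteSeq_two_mul, hermiteSeq_two_mul_add_one, mul_assoc, mul_div_assoc,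
    tsum_mul_left]
  ring

end Profile

section DilatedConv

open scoped Topology

theorem hasDerivAt_integral_mul_of_bounded {X : Type*} [MeasurableSpace X] {μ : Measure X}
    {f : X → ℝ} (hf : Integrable f μ) {k k' : ℝ → X → ℝ} {t₀ B B' : ℝ} {s : Set ℝ}
    (hs : s ∈ 𝓝 t₀) (hk_meas : ∀ t, AEStronglyMeasurable (k t) μ)
    (hk'_meas : AEStronglyMeasurable (k' t₀) μ) (hk_bound : ∀ v, |k t₀ v| ≤ B)
    (hk'_bound : ∀ t ∈ s, ∀ v, |k' t v| ≤ B')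
    (hk_deriv : ∀ t ∈ s, ∀ v, HasDerivAt (fun t ↦ k t v) (k' t v) t) :
    HasDerivAt (fun t ↦ ∫ v, f v * k t v ∂μ) (∫ v, f v * k' t₀ v ∂μ) t₀ := by
  refine (hasDerivAt_integral_of_dominated_loc_of_deriv_le (bound := fun v ↦ ‖f v‖ * B') hs
    (.of_forall fun t ↦ hf.aestronglyMeasurable.mul (hk_meas t))
    (hf.mul_bdd (hk_meas t₀) (.of_forall hk_bound))
    (hf.aestronglyMeasurable.mul hk'_meas) (.of_forall fun v t ht ↦ ?_) (hf.norm.mul_const B')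
    (.of_forall fun v t ht ↦ (hk_deriv t ht v).const_mul (f v))).2
  rw [norm_mul]
  gcongr
  exact hk'_bound t ht v

/-- The convolution of the signal `f` (with respect to `μ`) with the dilated profile
`y ↦ u (y ρ)`. The scale-space function `φ` of the theorem is `ρ ^ (p + 1)` times such a
convolution. -/
noncomputable def dilatedConv (μ : Measure ℝ) (f u : ℝ → ℝ) (x ρ : ℝ) : ℝ :=
  ∫ v, f v * u ((x - v) * ρ) ∂μ

variable {μ : Measure ℝ} {f u u' u'' w : ℝ → ℝ} {q : ℝ}

theorem measurable_deriv_of_hasDerivAt (hu : ∀ x, HasDerivAt u (u' x) x) : Measurable u' :=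
  funext (fun x ↦ (hu x).deriv) ▸ measurable_deriv u

theorem measurable_of_hasDerivAt (hu : ∀ x, HasDerivAt u (u' x) x) : Measurable u :=
  (Differentiable.continuous fun x ↦ (hu x).differentiableAt).measurable

theorem integrable_mul_comp_dilate (hf : Integrable f μ) (hu : Measurable u)
    (hu_bdd : ∃ C, ∀ x, |u x| ≤ C) (x ρ : ℝ) :
    Integrable (fun v ↦ f v * u ((x - v) * ρ)) μ := by
  obtain ⟨C, hC⟩ := hu_bdd
  exact hf.mul_bdd (hu.comp (by fun_prop)).aestronglyMeasurable (.of_forall fun v ↦ hC _)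

theorem dilatedConv_neg_add_const_mul (hf : Integrable f μ) (hu : Measurable u)
    (hu_bdd : ∃ C, ∀ x, |u x| ≤ C) (hw : Measurable w) (hw_bdd : ∃ C, ∀ x, |w x| ≤ C)
    (x ρ : ℝ) :
    dilatedConv μ f (fun y ↦ -(w y + q * u y)) x ρ =
      -(dilatedConv μ f w x ρ + q * dilatedConv μ f u x ρ) := by
  rw [dilatedConv, dilatedConv, dilatedConv, ← integral_const_mul,
    ← integral_add (integrable_mul_comp_dilate hf hw hw_bdd x ρ)
      ((integrable_mul_comp_dilate hf hu hu_bdd x ρ).const_mul q), ← integral_neg]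
  congr 1 with v
  ring

theorem hasDerivAt_dilatedConv_left (hf : Integrable f μ) (hu : ∀ x, HasDerivAt u (u' x) x)
    (hu_bdd : ∃ C, ∀ x, |u x| ≤ C) (hu'_bdd : ∃ C, ∀ x, |u' x| ≤ C) (x ρ : ℝ) :
    HasDerivAt (fun y ↦ dilatedConv μ f u y ρ) (ρ * dilatedConv μ f u' x ρ) x := by
  obtain ⟨C, hC⟩ := hu_bdd
  obtain ⟨C', hC'⟩ := hu'_bdd
  have hu_meas := measurable_of_hasDerivAt hu
  have hu'_meas := measurable_deriv_of_hasDerivAt hu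
  have hderiv := hasDerivAt_integral_mul_of_bounded hf (t₀ := x) univ_mem
    (k := fun y v ↦ u ((y - v) * ρ)) (k' := fun y v ↦ ρ * u' ((y - v) * ρ))
    (B := C) (B' := |ρ| * C')
    (fun y ↦ (hu_meas.comp (by fun_prop)).aestronglyMeasurable)
    ((hu'_meas.comp (by fun_prop)).const_mul ρ).aestronglyMeasurable
    (fun v ↦ hC _)
    (fun y _ v ↦ by rw [abs_mul]; gcongr; exact hC' _)
    (fun y _ v ↦ ((hu _).comp y (((hasDerivAt_id y).sub_const v).mul_const ρ)).congr_deriv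
      (by simp only [id, one_mul, mul_comm ρ]))
  refine hderiv.congr_deriv ?_
  simp only [dilatedConv, ← integral_const_mul, mul_left_comm]

theorem hasDerivAt_dilatedConv_right (hf : Integrable f μ) (hu : ∀ x, HasDerivAt u (u' x) x)
    (hu_bdd : ∃ C, ∀ x, |u x| ≤ C) (hxu'_bdd : ∃ C, ∀ x, |x * u' x| ≤ C)
    (x : ℝ) {ρ : ℝ} (hρ : 0 < ρ) :
    HasDerivAt (fun r ↦ dilatedConv μ f u x r)
      (ρ⁻¹ * dilatedConv μ f (fun y ↦ y * u' y) x ρ) ρ := by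
  obtain ⟨C, hC⟩ := hu_bdd
  obtain ⟨C', hC'⟩ := hxu'_bdd
  have hu_meas := measurable_of_hasDerivAt hu
  have hu'_meas := measurable_deriv_of_hasDerivAt hu
  have hbound (r : ℝ) (hr : ρ / 2 < r) (y : ℝ) : |r⁻¹ * (y * r * u' (y * r))| ≤ (ρ / 2)⁻¹ * C' := by
    have hr_pos : 0 < r := (half_pos hρ).trans hr
    rw [abs_mul, abs_of_pos (inv_pos.2 hr_pos)]
    gcongr
    exact hC' _
  have hderiv := hasDerivAt_integral_mul_of_bounded hf (t₀ := ρ) (Ioi_mem_nhds (half_lt_self hρ))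
    (k := fun r v ↦ u ((x - v) * r))
    (k' := fun r v ↦ r⁻¹ * ((x - v) * r * u' ((x - v) * r)))
    (fun r ↦ (hu_meas.comp (by fun_prop)).aestronglyMeasurable)
    (by fun_prop) (fun v ↦ hC _) (fun r hr v ↦ hbound r hr (x - v)) fun r hr v ↦ by
      have hr_ne : r ≠ 0 := ((half_pos hρ).trans hr).ne'
      refine ((hu _).comp r ((hasDerivAt_id r).const_mul (x - v))).congr_deriv ?_
      simp only [id]
      field_simp
  refine hderiv.congr_deriv ?_
  simp only [dilatedConv, ← integral_const_mul, mul_left_comm]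

theorem hasDerivAt_rpow_mul_dilatedConv (hf : Integrable f μ)
    (hu : ∀ x, HasDerivAt u (u' x) x) (hu' : ∀ x, HasDerivAt u' (u'' x) x)
    (hode : ∀ x, u'' x = -(x * u' x + q * u x)) (hu_bdd : ∃ C, ∀ x, |u x| ≤ C)
    (hu''_bdd : ∃ C, ∀ x, |u'' x| ≤ C) (x : ℝ) {ρ : ℝ} (hρ : 0 < ρ) :
    HasDerivAt (fun r ↦ r ^ q * dilatedConv μ f u x r)
      (-ρ ^ (q - 1) * dilatedConv μ f u'' x ρ) ρ := by
  have hxu' (y : ℝ) : y * u' y = -(u'' y + q * u y) := by linarith [hode y]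
  have hxu'_bdd : ∃ C, ∀ y, |y * u' y| ≤ C := by
    obtain ⟨C, hC⟩ := hu_bdd
    obtain ⟨C'', hC''⟩ := hu''_bdd
    refine ⟨C'' + |q| * C, fun y ↦ ?_⟩
    rw [hxu', abs_neg]
    refine (abs_add_le _ _).trans (add_le_add (hC'' y) ?_)
    rw [abs_mul]
    gcongr
    exact hC y
  have hconv := hasDerivAt_dilatedConv_right hf hu hu_bdd hxu'_bdd x hρ
  simp only [hxu'] at hconv
  rw [dilatedConv_neg_add_const_mul hf (measurable_of_hasDerivAt hu) hu_bdd
    (measurable_deriv_of_hasDerivAt hu') hu''_bdd] at hconv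
  refine ((hasDerivAt_rpow_const (.inl hρ.ne')).mul hconv).congr_deriv ?_
  rw [rpow_sub_one hρ.ne']
  ring

theorem hasDerivAt_deriv_const_mul_dilatedConv (hf : Integrable f μ)
    (hu : ∀ x, HasDerivAt u (u' x) x) (hu' : ∀ x, HasDerivAt u' (u'' x) x)
    (hu_bdd : ∃ C, ∀ x, |u x| ≤ C) (hu'_bdd : ∃ C, ∀ x, |u' x| ≤ C)
    (hu''_bdd : ∃ C, ∀ x, |u'' x| ≤ C) (c x ρ : ℝ) :
    HasDerivAt (deriv fun y ↦ c * dilatedConv μ f u y ρ)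
      (c * (ρ * (ρ * dilatedConv μ f u'' x ρ))) x := by
  have hderiv : (deriv fun y ↦ c * dilatedConv μ f u y ρ) =
      fun y ↦ c * (ρ * dilatedConv μ f u' y ρ) :=
    funext fun y ↦ ((hasDerivAt_dilatedConv_left hf hu hu_bdd hu'_bdd y ρ).const_mul c).deriv
  rw [hderiv]
  exact ((hasDerivAt_dilatedConv_left hf hu' hu'_bdd hu''_bdd x ρ).const_mul ρ).const_mul c

end DilatedConv

theorem mul_nonpos_and_neg_of_eq_neg_mul {a b c : ℝ} (hc : 0 < c) (h : b = -c * a) :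
    a * b ≤ 0 ∧ (a ≠ 0 ∨ b ≠ 0 → a * b < 0) := by
  have hab : a * b = -(c * a ^ 2) := by rw [h]; ring
  rw [hab]
  refine ⟨neg_nonpos.2 (by positivity), fun hne ↦ neg_neg_of_pos ?_⟩
  have ha : a ≠ 0 := by
    rintro rfl
    simp [h] at hne
  positivity

theorem stmt_10_general (p : ℝ) (hp : -1 < p) (α β : ℝ) (μ : Measure ℝ) (f : ℝ → ℝ)
    (hf_int : Integrable f μ) (φ : ℝ → ℝ → ℝ)
    (hφ : ∀ x ρ, φ x ρ =
      ∫ v : ℝ, f v * (ρ ^ (p + 1) * (α * LamE p ((x - v) * ρ) + β * LamO p ((x - v) * ρ))) ∂μ) :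
    ∀ x : ℝ, ∀ ρ : ℝ, 0 < ρ →
      DifferentiableAt ℝ (fun y => φ y ρ) x ∧
      DifferentiableAt ℝ (deriv fun y => φ y ρ) x ∧
      DifferentiableAt ℝ (fun r => φ x r) ρ ∧
      deriv (deriv fun y => φ y ρ) x = -ρ ^ 3 * deriv (fun r => φ x r) ρ ∧
      deriv (fun r => φ x r) ρ * deriv (deriv fun y => φ y ρ) x ≤ 0 ∧
      ((deriv (fun r => φ x r) ρ ≠ 0 ∨ deriv (deriv fun y => φ y ρ) x ≠ 0) →
        deriv (fun r => φ x r) ρ * deriv (deriv fun y => φ y ρ) x < 0) := by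
  intro x ρ hρ
  have ha := isHermiteSeq_hermiteSeq (p + 1) (α / √(2 * π)) (β / √(2 * π))
  set a := hermiteSeq (p + 1) (α / √(2 * π)) (β / √(2 * π))
  have hu := ha.hasDerivAt_expGenFun
  have hu' := ha.shift.hasDerivAt_expGenFun
  have hu_bdd := ha.exists_abs_expGenFun_le (by linarith)
  have hu'_bdd := ha.shift.exists_abs_expGenFun_le (by linarith)
  have hu''_bdd := ha.shift.shift.exists_abs_expGenFun_le (by linarith)
  have hφ_eq (y r : ℝ) : φ y r = r ^ (p + 1) * dilatedConv μ f (expGenFun a) y r := by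
    simp only [hφ, mul_LamE_add_mul_LamO, dilatedConv, ← integral_const_mul, mul_left_comm, a]
  have hx := (hasDerivAt_dilatedConv_left hf_int hu hu_bdd hu'_bdd x ρ).const_mul (ρ ^ (p + 1))
  have hxx := hasDerivAt_deriv_const_mul_dilatedConv hf_int hu hu' hu_bdd hu'_bdd hu''_bdd
    (ρ ^ (p + 1)) x ρ
  have hρ_deriv := hasDerivAt_rpow_mul_dilatedConv hf_int hu hu' ha.expGenFun_ode hu_bdd hu''_bdd
    x hρ
  simp only [← hφ_eq] at hx hxx hρ_deriv
  have hpde : deriv (deriv fun y ↦ φ y ρ) x = -ρ ^ 3 * deriv (fun r ↦ φ x r) ρ := by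
    rw [hxx.deriv, hρ_deriv.deriv, rpow_sub_one hρ.ne']
    field_simp
  exact ⟨hx.differentiableAt, hxx.differentiableAt, hρ_deriv.differentiableAt, hpde,
    mul_nonpos_and_neg_of_eq_neg_mul (by positivity) hpde⟩

/-- For the kernel `g(x,ρ) = ρ^{p+1}(α Λ^e_p(xρ) + β Λ^o_p(xρ))` and a continuous, bounded,
integrable signal `f`, the convolution `φ(x,ρ) = ∫ f(v) g(x-v,ρ) dv` is twice differentiable
in `x`, differentiable in `ρ`, satisfies `φ_{xx} = -ρ³ φ_ρ`, and the strong monotonicity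
condition `φ_ρ · φ_{xx} ≤ 0`, strictly whenever one of the two factors is nonzero. -/
theorem stmt_10 (p : ℝ) (hp : 0 < p) (α β : ℝ) (f : ℝ → ℝ)
    (hf_cont : Continuous f) (hf_bdd : ∃ M, ∀ x, |f x| ≤ M) (hf_int : Integrable f)
    (φ : ℝ → ℝ → ℝ)
    (hφ : ∀ x ρ, φ x ρ =
      ∫ v : ℝ, f v * (ρ ^ (p + 1) * (α * LamE p ((x - v) * ρ) + β * LamO p ((x - v) * ρ)))) :
    ∀ x : ℝ, ∀ ρ : ℝ, 0 < ρ →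
      DifferentiableAt ℝ (fun y => φ y ρ) x ∧
      DifferentiableAt ℝ (deriv fun y => φ y ρ) x ∧
      DifferentiableAt ℝ (fun r => φ x r) ρ ∧
      deriv (deriv fun y => φ y ρ) x = -ρ ^ 3 * deriv (fun r => φ x r) ρ ∧
      deriv (fun r => φ x r) ρ * deriv (deriv fun y => φ y ρ) x ≤ 0 ∧
      ((deriv (fun r => φ x r) ρ ≠ 0 ∨ deriv (deriv fun y => φ y ρ) x ≠ 0) →
        deriv (fun r => φ x r) ρ * deriv (deriv fun y => φ y ρ) x < 0) :=
  stmt_10_general p (by linarith) α β volume f hf_int φ hφ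
end
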